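/- arXiv:1304.3536 — 2 statements merged into one kernel-verified Lean document; each statement's English description precedes it below -/
import Mathlib

section
/- Let ρ ∈ (0,1] and let φ : (0,∞) → ℝ be bounded and uniformly ρ-Hölder continuous. Let ν be a finite Borel measure on (0,∞). Then lim_{N→∞} (1/(N−1)!) ∫_{(0,∞)} ( ∫_0^∞ φ(1/s) ((N−1)sλ)^N e^{−(N−1)sλ} ds/s ) dν(λ) = ∫_{(0,∞)} φ dν, where the limit is over integers N ≥ 2. -/
open MeasureTheory Set Filter

lemma mom_int (m : ℕ) {c : ℝ} (hc : 0 < c) :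
    ∫ s in Ioi (0:ℝ), s ^ m * Real.exp (-(c * s)) = (m.factorial : ℝ) / c ^ (m + 1) := by
  have h := Real.integral_rpow_mul_exp_neg_mul_Ioi (a := (m:ℝ) + 1) (r := c) (by positivity) hc
  rw [Real.Gamma_nat_eq_factorial] at h
  simp only [add_sub_cancel_right, Real.rpow_natCast] at h
  rw [h]
  have : ((m:ℝ) + 1) = ((m + 1 : ℕ) : ℝ) := by push_cast; ring
  rw [this, Real.rpow_natCast, one_div, inv_pow]
  field_simp

lemma mom_integrable (m : ℕ) {c : ℝ} (hc : 0 < c) :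
    IntegrableOn (fun s => s ^ m * Real.exp (-(c * s))) (Ioi (0:ℝ)) := by
  refine Integrable.of_integral_ne_zero ?_
  rw [mom_int m hc]
  positivity

/-- The weight for index `n + 3`. -/
noncomputable def wt (n : ℕ) (lam s : ℝ) : ℝ :=
  (((n:ℝ) + 2) * s * lam) ^ (n + 3) * Real.exp (-(((n:ℝ) + 2) * s * lam)) / s

lemma wt_eq (n : ℕ) (lam : ℝ) {s : ℝ} (hs : s ∈ Ioi (0:ℝ)) : wt n lam s =
    (((n:ℝ) + 2) * lam) ^ (n + 3) * (s ^ (n + 2) * Real.exp (-((((n:ℝ) + 2) * lam) * s))) := by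
  have hs' : s ≠ 0 := ne_of_gt hs
  unfold wt
  have : ((n:ℝ) + 2) * s * lam = (((n:ℝ) + 2) * lam) * s := by ring
  rw [this, mul_pow, pow_succ s]
  field_simp

lemma wt_nonneg (n : ℕ) {lam s : ℝ} (hl : 0 < lam) (hs : s ∈ Ioi (0:ℝ)) : 0 ≤ wt n lam s := by
  have hs' : 0 < s := hs
  unfold wt; positivity

lemma wt_integrable (n : ℕ) {lam : ℝ} (hl : 0 < lam) : IntegrableOn (wt n lam) (Ioi (0:ℝ)) := by
  have hc : 0 < ((n:ℝ) + 2) * lam := by positivity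
  have h := (mom_integrable (n + 2) hc).const_mul ((((n:ℝ) + 2) * lam) ^ (n + 3))
  exact IntegrableOn.congr_fun h
    (fun s hs => (wt_eq n lam hs).symm) measurableSet_Ioi

lemma wt_integral (n : ℕ) {lam : ℝ} (hl : 0 < lam) :
    ∫ s in Ioi (0:ℝ), wt n lam s = ((n + 2).factorial : ℝ) := by
  have hc : 0 < ((n:ℝ) + 2) * lam := by positivity
  rw [setIntegral_congr_fun measurableSet_Ioi (fun s hs => wt_eq n lam hs), integral_const_mul,
    mom_int _ hc]
  field_simp

lemma var_eq (n : ℕ) (lam : ℝ) {s : ℝ} (hs : s ∈ Ioi (0:ℝ)) : (1 / s - lam) ^ 2 * wt n lam s =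
    (((n:ℝ) + 2) * lam) ^ (n + 3) * (s ^ n * Real.exp (-((((n:ℝ) + 2) * lam) * s))
      - 2 * lam * (s ^ (n + 1) * Real.exp (-((((n:ℝ) + 2) * lam) * s)))
      + lam ^ 2 * (s ^ (n + 2) * Real.exp (-((((n:ℝ) + 2) * lam) * s)))) := by
  have hs' : s ≠ 0 := ne_of_gt hs
  rw [wt_eq n lam hs, pow_add s n 2, pow_add s n 1]
  generalize Real.exp _ = E
  generalize (((n:ℝ) + 2) * lam) ^ (n + 3) = C
  generalize s ^ n = T
  field_simp
  ring

lemma var_integrable (n : ℕ) {lam : ℝ} (hl : 0 < lam) :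
    IntegrableOn (fun s => (1 / s - lam) ^ 2 * wt n lam s) (Ioi (0:ℝ)) := by
  have hc : 0 < ((n:ℝ) + 2) * lam := by positivity
  have h := ((((mom_integrable n hc).sub ((mom_integrable (n + 1) hc).const_mul (2 * lam))).add
    ((mom_integrable (n + 2) hc).const_mul (lam ^ 2))).const_mul ((((n:ℝ) + 2) * lam) ^ (n + 3)))
  exact IntegrableOn.congr_fun h (fun s hs => (var_eq n lam hs).symm) measurableSet_Ioi

lemma var_integral (n : ℕ) {lam : ℝ} (hl : 0 < lam) :
    ∫ s in Ioi (0:ℝ), (1 / s - lam) ^ 2 * wt n lam s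
      = ((n + 2).factorial : ℝ) * (lam ^ 2 / ((n:ℝ) + 1)) := by
  have hc : 0 < ((n:ℝ) + 2) * lam := by positivity
  have h0 := mom_integrable n hc
  have h1 := (mom_integrable (n + 1) hc).const_mul (2 * lam)
  have h2 := (mom_integrable (n + 2) hc).const_mul (lam ^ 2)
  have h01 : Integrable (fun s => s ^ n * Real.exp (-((((n:ℝ) + 2) * lam) * s))
      - 2 * lam * (s ^ (n + 1) * Real.exp (-((((n:ℝ) + 2) * lam) * s))))
      (volume.restrict (Ioi (0:ℝ))) := h0.sub h1
  rw [setIntegral_congr_fun measurableSet_Ioi (fun s hs => var_eq n lam hs), integral_const_mul,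
    integral_add h01 h2, integral_sub h0 h1, integral_const_mul, integral_const_mul,
    mom_int _ hc, mom_int _ hc, mom_int _ hc]
  have e2 : ((n + 2).factorial : ℝ) = ((n:ℝ) + 2) * ((n:ℝ) + 1) * (n.factorial : ℝ) := by
    rw [Nat.factorial_succ, Nat.factorial_succ]; push_cast; ring
  have e1 : ((n + 1).factorial : ℝ) = ((n:ℝ) + 1) * (n.factorial : ℝ) := by
    rw [Nat.factorial_succ]; push_cast; ring
  rw [e2, e1]
  have hn : (n:ℝ) + 1 ≠ 0 := by positivity
  have hn2 : (n:ℝ) + 2 ≠ 0 := by positivity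
  have hl' := hl.ne'
  generalize (n.factorial : ℝ) = F
  have p1 : (((n:ℝ) + 2) * lam) ^ (n + 3) = (((n:ℝ) + 2) * lam) ^ n * (((n:ℝ) + 2) * lam) ^ 3 := by
    ring
  have p2 : (((n:ℝ) + 2) * lam) ^ (n + 1 + 1) = (((n:ℝ) + 2) * lam) ^ n * (((n:ℝ) + 2) * lam) ^ 2 := by
    ring
  have p3 : (((n:ℝ) + 2) * lam) ^ (n + 1) = (((n:ℝ) + 2) * lam) ^ n * (((n:ℝ) + 2) * lam) := by
    ring
  have p4 : (((n:ℝ) + 2) * lam) ^ (n + 2 + 1) = (((n:ℝ) + 2) * lam) ^ n * (((n:ℝ) + 2) * lam) ^ 3 := by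
    ring
  rw [p4, p2, p3]
  have hp : (((n:ℝ) + 2) * lam) ^ n ≠ 0 := by positivity
  generalize (((n:ℝ) + 2) * lam) ^ n = P at *
  field_simp
  ring

/-- The normalized inner integral. -/
noncomputable def KK (ψ : ℝ → ℝ) (n : ℕ) (lam : ℝ) : ℝ :=
  (1 / ((n + 2).factorial : ℝ)) * ∫ s in Ioi (0:ℝ), ψ (1 / s) * wt n lam s

lemma KK_meas {ψ : ℝ → ℝ} (hψ : Measurable ψ) (n : ℕ) : StronglyMeasurable (KK ψ n) := by
  unfold KK
  refine StronglyMeasurable.const_mul ?_ _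
  apply StronglyMeasurable.integral_prod_right (f := fun lam s => ψ (1 / s) * wt n lam s)
  apply Measurable.stronglyMeasurable
  unfold wt Function.uncurry
  fun_prop

lemma int_mul {ψ : ℝ → ℝ} (hψ : Measurable ψ) {M : ℝ} (hb : ∀ x, |ψ x| ≤ M) (n : ℕ) {lam : ℝ}
    (hl : 0 < lam) : IntegrableOn (fun s => ψ (1 / s) * wt n lam s) (Ioi (0:ℝ)) := by
  refine Integrable.bdd_mul (c := M) (wt_integrable n hl) ?_ ?_
  · exact (hψ.comp (by fun_prop)).aestronglyMeasurable
  · exact ae_of_all _ (fun s => hb _)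

lemma KK_bound {ψ : ℝ → ℝ} {M : ℝ} (hb : ∀ x, |ψ x| ≤ M) (n : ℕ) {lam : ℝ}
    (hl : 0 < lam) : |KK ψ n lam| ≤ M := by
  unfold KK
  have hF : (0:ℝ) < ((n + 2).factorial : ℝ) := by positivity
  have h : ‖∫ s in Ioi (0:ℝ), ψ (1 / s) * wt n lam s‖ ≤ ∫ s in Ioi (0:ℝ), M * wt n lam s := by
    refine norm_integral_le_of_norm_le ((wt_integrable n hl).const_mul M) ?_
    filter_upwards [ae_restrict_mem measurableSet_Ioi] with s hs
    rw [norm_mul, Real.norm_of_nonneg (wt_nonneg n hl hs)]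
    exact mul_le_mul_of_nonneg_right (hb _) (wt_nonneg n hl hs)
  rw [integral_const_mul, wt_integral n hl, Real.norm_eq_abs] at h
  rw [abs_mul, abs_of_pos (by positivity), one_div, inv_mul_le_iff₀ hF]
  linarith

lemma KK_est {ψ : ℝ → ℝ} (hψ : Measurable ψ) {M : ℝ} (hb : ∀ x, |ψ x| ≤ M) (n : ℕ) {lam : ℝ}
    (hl : 0 < lam) {ε C : ℝ}
    (h : ∀ x ∈ Ioi (0:ℝ), |ψ x - ψ lam| ≤ ε + C * (x - lam) ^ 2) :
    |KK ψ n lam - ψ lam| ≤ ε + C * (lam ^ 2 / ((n:ℝ) + 1)) := by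
  have hF : (0:ℝ) < ((n + 2).factorial : ℝ) := by positivity
  have e : KK ψ n lam - ψ lam = (1 / ((n + 2).factorial : ℝ)) *
      ∫ s in Ioi (0:ℝ), (ψ (1 / s) - ψ lam) * wt n lam s := by
    have : ∀ s, (ψ (1 / s) - ψ lam) * wt n lam s
      = ψ (1 / s) * wt n lam s - ψ lam * wt n lam s := fun s => by ring
    simp_rw [this]
    rw [integral_sub (int_mul hψ hb n hl) ((wt_integrable n hl).const_mul _), integral_const_mul,
      wt_integral n hl]
    unfold KK
    field_simp
  have h2 : ‖∫ s in Ioi (0:ℝ), (ψ (1 / s) - ψ lam) * wt n lam s‖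
      ≤ ∫ s in Ioi (0:ℝ), (ε * wt n lam s + C * ((1 / s - lam) ^ 2 * wt n lam s)) := by
    refine norm_integral_le_of_norm_le
      (((wt_integrable n hl).const_mul ε).add ((var_integrable n hl).const_mul C)) ?_
    filter_upwards [ae_restrict_mem measurableSet_Ioi] with s hs
    rw [norm_mul, Real.norm_of_nonneg (wt_nonneg n hl hs), Real.norm_eq_abs]
    have hs' : (1 / s) ∈ Ioi (0:ℝ) := mem_Ioi.mpr (one_div_pos.mpr (mem_Ioi.mp hs))
    have := mul_le_mul_of_nonneg_right (h _ hs') (wt_nonneg n hl hs)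
    linarith
  rw [integral_add ((wt_integrable n hl).const_mul ε) ((var_integrable n hl).const_mul C),
    integral_const_mul, integral_const_mul, wt_integral n hl, var_integral n hl,
    Real.norm_eq_abs] at h2
  rw [e, abs_mul, abs_of_pos (by positivity), one_div, inv_mul_le_iff₀ hF]
  linarith

lemma KK_tendsto {ψ : ℝ → ℝ} (hψ : Measurable ψ) {M : ℝ} (hb : ∀ x, |ψ x| ≤ M) {lam : ℝ}
    (hl : 0 < lam) (hc : ContinuousAt ψ lam) :
    Tendsto (fun n => KK ψ n lam) atTop (nhds (ψ lam)) := by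
  rw [Metric.tendsto_atTop]
  intro ε hε
  obtain ⟨δ, hδ, hd⟩ := Metric.continuousAt_iff.mp hc (ε / 2) (by positivity)
  have hM : 0 ≤ M := (abs_nonneg _).trans (hb 0)
  have h : ∀ x ∈ Ioi (0:ℝ), |ψ x - ψ lam| ≤ ε / 2 + (2 * M / δ ^ 2) * (x - lam) ^ 2 := by
    intro x _
    by_cases hx : dist x lam < δ
    · have := hd hx
      rw [Real.dist_eq] at this
      have : 0 ≤ (2 * M / δ ^ 2) * (x - lam) ^ 2 := by positivity
      linarith
    · rw [Real.dist_eq, not_lt] at hx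
      have h1 : δ ^ 2 ≤ (x - lam) ^ 2 := by
        rw [← sq_abs (x - lam)]; gcongr
      have h2 : 2 * M ≤ (2 * M / δ ^ 2) * (x - lam) ^ 2 := by
        rw [div_mul_eq_mul_div, le_div_iff₀ (by positivity)]
        gcongr
      have h3 := abs_sub (ψ x) (ψ lam)
      have := hb x
      have := hb lam
      linarith
  have hlim : Tendsto (fun n : ℕ => (2 * M / δ ^ 2) * (lam ^ 2 / ((n:ℝ) + 1))) atTop (nhds 0) := by
    have := (tendsto_one_div_add_atTop_nhds_zero_nat (𝕜 := ℝ)).const_mul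
      ((2 * M / δ ^ 2) * lam ^ 2)
    rw [mul_zero] at this
    refine this.congr (fun n => by ring)
  obtain ⟨n0, hn0⟩ := eventually_atTop.mp (hlim.eventually (gt_mem_nhds (half_pos hε)))
  refine ⟨n0, fun n hn => ?_⟩
  have := KK_est hψ hb n hl h
  have := hn0 n hn
  rw [Real.dist_eq]
  linarith

/-- Let `ρ ∈ (0,1]`, `φ : (0,∞) → ℝ` bounded and uniformly `ρ`-Hölder, and `ν` a finite
Borel measure on `(0,∞)`. Then
`(1/(N−1)!) ∫_{(0,∞)} (∫_0^∞ φ(1/s) ((N−1)sλ)^N e^{−(N−1)sλ} ds/s) dν(λ) → ∫_{(0,∞)} φ dν`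
as the integer `N → ∞`. -/
theorem stmt_0 (ρ : ℝ) (hρ : ρ ∈ Set.Ioc (0 : ℝ) 1) (φ : ℝ → ℝ) (M L : ℝ)
    (hbdd : ∀ x ∈ Set.Ioi (0 : ℝ), |φ x| ≤ M)
    (hHol : ∀ x ∈ Set.Ioi (0 : ℝ), ∀ y ∈ Set.Ioi (0 : ℝ), |φ x - φ y| ≤ L * |x - y| ^ ρ)
    (ν : Measure ℝ) [IsFiniteMeasure ν] (hν : ν (Set.Iic 0) = 0) :
    Tendsto (fun N : ℕ =>
      (1 / (Nat.factorial (N - 1) : ℝ)) *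
        ∫ lam in Ioi (0 : ℝ),
          (∫ s in Ioi (0 : ℝ),
            φ (1 / s) * (((N : ℝ) - 1) * s * lam) ^ N *
              Real.exp (-(((N : ℝ) - 1) * s * lam)) / s) ∂ν)
      atTop (nhds (∫ lam in Ioi (0 : ℝ), φ lam ∂ν)) := by
  have hcont : ∀ x ∈ Ioi (0:ℝ), ContinuousAt φ x := by
    intro x hx
    have h0 : Tendsto (fun y => L * |y - x| ^ ρ) (nhds x) (nhds 0) := by
      have : ContinuousAt (fun y => L * |y - x| ^ ρ) x := by
        refine continuousAt_const.mul (ContinuousAt.rpow_const (by fun_prop) (Or.inr hρ.1.le))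
      have h := this.tendsto
      simpa [Real.zero_rpow hρ.1.ne'] using h
    rw [ContinuousAt, tendsto_iff_norm_sub_tendsto_zero]
    refine squeeze_zero' (Eventually.of_forall fun _ => norm_nonneg _) ?_ h0
    filter_upwards [Ioi_mem_nhds hx] with y hy
    exact hHol y hy x hx
  set ψ : ℝ → ℝ := (Ioi (0:ℝ)).indicator φ with hψdef
  have hψφ : ∀ x ∈ Ioi (0:ℝ), ψ x = φ x := fun x hx => indicator_of_mem hx φ
  have hM : 0 ≤ M := (abs_nonneg _).trans (hbdd 1 (by simp))
  have hb : ∀ x, |ψ x| ≤ M := by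
    intro x
    by_cases hx : x ∈ Ioi (0:ℝ)
    · rw [hψφ x hx]; exact hbdd x hx
    · rw [hψdef, indicator_of_notMem hx, abs_zero]; exact hM
  have hψc : ∀ x ∈ Ioi (0:ℝ), ContinuousAt ψ x := by
    intro x hx
    refine (hcont x hx).congr ?_
    filter_upwards [Ioi_mem_nhds hx] with y hy
    exact (hψφ y hy).symm
  have hψm : Measurable ψ := by
    have hco : ContinuousOn φ (Ioi 0) := fun x hx => (hcont x hx).continuousWithinAt
    have := hco.measurable_piecewise (g := (0 : ℝ → ℝ)) continuous_zero.continuousOn measurableSet_Ioi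
    rwa [Set.piecewise_eq_indicator] at this
  rw [← tendsto_add_atTop_iff_nat 3]
  have key : Tendsto (fun n : ℕ => ∫ lam in Ioi (0:ℝ), KK ψ n lam ∂ν) atTop
      (nhds (∫ lam in Ioi (0:ℝ), ψ lam ∂ν)) := by
    refine tendsto_integral_of_dominated_convergence (fun _ => M) ?_ (integrable_const M) ?_ ?_
    · exact fun n => (KK_meas hψm n).aestronglyMeasurable
    · intro n
      filter_upwards [ae_restrict_mem measurableSet_Ioi] with lam hl
      exact KK_bound hb n hl
    · filter_upwards [ae_restrict_mem measurableSet_Ioi] with lam hl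
      exact KK_tendsto hψm hb hl (hψc lam hl)
  rw [setIntegral_congr_fun measurableSet_Ioi hψφ] at key
  refine key.congr (fun n => ?_)
  unfold KK
  rw [integral_const_mul]
  have : n + 3 - 1 = n + 2 := rfl
  rw [this]
  congr 1
  congr 1
  funext lam
  refine setIntegral_congr_fun measurableSet_Ioi (fun s hs => ?_)
  have hs' : (1 / s) ∈ Ioi (0:ℝ) := mem_Ioi.mpr (one_div_pos.mpr (mem_Ioi.mp hs))
  have e : ((n + 3 : ℕ) : ℝ) - 1 = (n:ℝ) + 2 := by push_cast; ring
  simp only [hψφ _ hs', e, wt]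
  ring
end

section
/- Let ρ ∈ (0,1] and let φ : (0,∞) → ℝ be bounded and uniformly ρ-Hölder continuous. For an integer N ≥ 2 and λ > 0 set μ_N(λ) := (1/(N−1)!) ∫_0^∞ φ(1/s) ((N−1)sλ)^N e^{−(N−1)sλ} ds/s. Then for every λ > 0, μ_N(λ) → φ(λ) as N → ∞. -/
open MeasureTheory Set Filter

lemma aux_moment (m : ℕ) (c : ℝ) (hc : 0 < c) :
    IntegrableOn (fun s : ℝ => s ^ m * Real.exp (-(c * s))) (Ioi 0) ∧
    ∫ s in Ioi (0 : ℝ), s ^ m * Real.exp (-(c * s)) = (Nat.factorial m : ℝ) / c ^ (m + 1) := by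
  have h := Real.integral_rpow_mul_exp_neg_mul_Ioi (a := (m : ℝ) + 1) (r := c) (by positivity) hc
  have e : ∫ s in Ioi (0 : ℝ), s ^ m * Real.exp (-(c * s))
      = (Nat.factorial m : ℝ) / c ^ (m + 1) := by
    rw [Real.Gamma_nat_eq_factorial] at h
    have : ((m : ℝ) + 1) = ((m + 1 : ℕ) : ℝ) := by push_cast; ring
    simp only [add_sub_cancel_right, Real.rpow_natCast] at h
    rw [h, this, Real.rpow_natCast, one_div, inv_pow, div_eq_inv_mul]
  refine ⟨?_, e⟩
  by_contra hn
  have h0 := integral_undef hn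
  rw [e] at h0
  have : (0 : ℝ) < (Nat.factorial m : ℝ) / c ^ (m + 1) := by positivity
  linarith

lemma aux_cont (ρ : ℝ) (hρ : 0 < ρ) (φ : ℝ → ℝ) (L : ℝ)
    (hHol : ∀ x ∈ Set.Ioi (0 : ℝ), ∀ y ∈ Set.Ioi (0 : ℝ), |φ x - φ y| ≤ L * |x - y| ^ ρ) :
    ContinuousOn φ (Ioi 0) := by
  intro y hy
  rw [ContinuousWithinAt, tendsto_iff_dist_tendsto_zero]
  have hc : Continuous (fun x : ℝ => L * |x - y| ^ ρ) := by
    have : Continuous (fun x : ℝ => |x - y|) := by fun_prop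
    exact continuous_const.mul (this.rpow_const (fun _ => Or.inr hρ.le))
  have h0 : Tendsto (fun x : ℝ => L * |x - y| ^ ρ) (nhdsWithin y (Ioi 0)) (nhds 0) := by
    have := (hc.tendsto y).mono_left (nhdsWithin_le_nhds (s := Ioi (0:ℝ)))
    simpa [Real.zero_rpow hρ.ne'] using this
  refine squeeze_zero' (Eventually.of_forall fun _ => dist_nonneg) ?_ h0
  filter_upwards [self_mem_nhdsWithin] with x hx
  exact hHol x hx y hy

lemma aux_bound (φ : ℝ → ℝ) (M : ℝ) (hφ : ContinuousOn φ (Ioi 0))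
    (hbdd : ∀ x ∈ Set.Ioi (0 : ℝ), |φ x| ≤ M) (lam : ℝ) (hlam : 0 < lam)
    (ε C : ℝ) (hE : ∀ x ∈ Ioi (0 : ℝ), |φ x - φ lam| ≤ ε + C * (x - lam) ^ 2) (n : ℕ) :
    |(1 / (Nat.factorial (n + 2) : ℝ)) *
        (∫ s in Ioi (0 : ℝ), φ (1 / s) * (((n : ℝ) + 2) * s * lam) ^ (n + 3) *
            Real.exp (-(((n : ℝ) + 2) * s * lam)) / s) - φ lam| ≤
      ε + C * (lam ^ 2 * (1 / ((n : ℝ) + 1))) := by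
  set c : ℝ := ((n : ℝ) + 2) * lam with hcdef
  have hc : 0 < c := by positivity
  obtain ⟨i0, e0⟩ := aux_moment n c hc
  obtain ⟨i1, e1⟩ := aux_moment (n + 1) c hc
  obtain ⟨i2, e2⟩ := aux_moment (n + 2) c hc
  set K : ℝ := c ^ (n + 3) / (Nat.factorial (n + 2) : ℝ) with hK
  have hKpos : 0 < K := by positivity
  set g : ℕ → ℝ → ℝ := fun m s => s ^ m * Real.exp (-(c * s)) with hg
  have hφm : AEStronglyMeasurable (fun s : ℝ => φ (1 / s)) (volume.restrict (Ioi 0)) := by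
    refine ContinuousOn.aestronglyMeasurable ?_ measurableSet_Ioi
    refine hφ.comp (t := Ioi 0) ?_ ?_
    · exact continuousOn_const.div continuousOn_id (fun x hx => ne_of_gt hx)
    · intro s hs
      exact mem_Ioi.mpr (one_div_pos.mpr (mem_Ioi.mp hs))
  have iφ : Integrable (fun s => φ (1 / s) * g (n + 2) s) (volume.restrict (Ioi 0)) := by
    refine Integrable.bdd_mul (c := M) i2 hφm ?_
    filter_upwards [ae_restrict_mem measurableSet_Ioi] with s hs
    exact hbdd _ (mem_Ioi.mpr (one_div_pos.mpr (mem_Ioi.mp hs)))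
  have eq1 : (1 / (Nat.factorial (n + 2) : ℝ)) *
        (∫ s in Ioi (0 : ℝ), φ (1 / s) * (((n : ℝ) + 2) * s * lam) ^ (n + 3) *
            Real.exp (-(((n : ℝ) + 2) * s * lam)) / s)
      = K * ∫ s in Ioi (0 : ℝ), φ (1 / s) * g (n + 2) s := by
    rw [← integral_const_mul, ← integral_const_mul]
    refine setIntegral_congr_fun measurableSet_Ioi ?_
    intro s hs
    have hs' : s ≠ 0 := ne_of_gt hs
    have h1 : ((n : ℝ) + 2) * s * lam = c * s := by rw [hcdef]; ring
    simp only [hg, hK, h1]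
    rw [mul_pow c s, pow_succ s (n + 2)]
    field_simp
  have eq2 : φ lam = K * ∫ s in Ioi (0 : ℝ), φ lam * g (n + 2) s := by
    rw [integral_const_mul, e2, hK]
    field_simp
  rw [eq1]
  nth_rewrite 1 [eq2]
  rw [← mul_sub, ← integral_sub iφ (i2.const_mul _), abs_mul, abs_of_pos hKpos]
  have hle : |∫ s in Ioi (0 : ℝ), (φ (1 / s) * g (n + 2) s - φ lam * g (n + 2) s)| ≤
      ∫ s in Ioi (0 : ℝ), ((ε + C * lam ^ 2) * g (n + 2) s + (-(2 * C * lam)) * g (n + 1) s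
        + C * g n s) := by
    rw [← Real.norm_eq_abs]
    refine norm_integral_le_of_norm_le
      (((i2.const_mul _).add (i1.const_mul _)).add (i0.const_mul _)) ?_
    filter_upwards [ae_restrict_mem measurableSet_Ioi] with s hs
    have hs0 : (0 : ℝ) < s := hs
    have hg2 : 0 ≤ g (n + 2) s := by simp only [hg]; positivity
    rw [← sub_mul, Real.norm_eq_abs, abs_mul, abs_of_nonneg hg2]
    refine (mul_le_mul_of_nonneg_right (hE _ (mem_Ioi.mpr (one_div_pos.mpr hs0))) hg2).trans (le_of_eq ?_)
    simp only [hg]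
    field_simp
    ring
  refine (mul_le_mul_of_nonneg_left hle hKpos.le).trans (le_of_eq ?_)
  have j2 : Integrable (fun s => (ε + C * lam ^ 2) * g (n + 2) s) (volume.restrict (Ioi 0)) :=
    i2.const_mul _
  have j1 : Integrable (fun s => (-(2 * C * lam)) * g (n + 1) s) (volume.restrict (Ioi 0)) :=
    i1.const_mul _
  have j0 : Integrable (fun s => C * g n s) (volume.restrict (Ioi 0)) := i0.const_mul _
  have j21 : Integrable (fun s => (ε + C * lam ^ 2) * g (n + 2) s
      + (-(2 * C * lam)) * g (n + 1) s) (volume.restrict (Ioi 0)) := j2.add j1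
  rw [integral_add j21 j0, integral_add j2 j1, integral_const_mul, integral_const_mul,
    integral_const_mul, e0, e1, e2, hK]
  have hf0 : (Nat.factorial n : ℝ) ≠ 0 := by positivity
  rw [Nat.factorial_succ (n + 1), Nat.factorial_succ n]
  push_cast
  have h2 : (n : ℝ) + 1 + 1 = n + 2 := by ring
  rw [h2]
  have hl : lam = c / ((n : ℝ) + 2) := by rw [hcdef]; field_simp
  rw [hl]
  clear_value c
  field_simp
  ring

/-- Let `ρ ∈ (0,1]` and `φ : (0,∞) → ℝ` bounded and uniformly `ρ`-Hölder. For an integer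
`N ≥ 2` and `λ > 0` set
`μ_N(λ) := (1/(N−1)!) ∫_0^∞ φ(1/s) ((N−1)sλ)^N e^{−(N−1)sλ} ds/s`.
Then `μ_N(λ) → φ(λ)` as `N → ∞`, for every `λ > 0`. -/
theorem stmt_2 (ρ : ℝ) (hρ : ρ ∈ Set.Ioc (0 : ℝ) 1) (φ : ℝ → ℝ) (M L : ℝ)
    (hbdd : ∀ x ∈ Set.Ioi (0 : ℝ), |φ x| ≤ M)
    (hHol : ∀ x ∈ Set.Ioi (0 : ℝ), ∀ y ∈ Set.Ioi (0 : ℝ), |φ x - φ y| ≤ L * |x - y| ^ ρ)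
    (lam : ℝ) (hlam : 0 < lam) :
    Tendsto (fun N : ℕ =>
      (1 / (Nat.factorial (N - 1) : ℝ)) *
        ∫ s in Ioi (0 : ℝ),
          φ (1 / s) * (((N : ℝ) - 1) * s * lam) ^ N *
            Real.exp (-(((N : ℝ) - 1) * s * lam)) / s)
      atTop (nhds (φ lam)) := by
  have hφ := aux_cont ρ hρ.1 φ L hHol
  rw [← tendsto_add_atTop_iff_nat 3, Metric.tendsto_nhds]
  intro ε hε
  obtain ⟨δ, hδ, hδ'⟩ := Metric.continuousOn_iff.mp hφ lam hlam (ε / 2) (by positivity)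
  have hM : 0 ≤ M := (abs_nonneg _).trans (hbdd lam hlam)
  have hE : ∀ x ∈ Ioi (0 : ℝ), |φ x - φ lam| ≤ ε / 2 + (2 * M / δ ^ 2) * (x - lam) ^ 2 := by
    intro x hx
    by_cases h : |x - lam| < δ
    · have h1 := hδ' x hx h
      rw [Real.dist_eq] at h1
      have : 0 ≤ (2 * M / δ ^ 2) * (x - lam) ^ 2 := by positivity
      linarith
    · push Not at h
      have h1 : |φ x - φ lam| ≤ 2 * M := by
        have := abs_sub (φ x) (φ lam)
        linarith [hbdd x hx, hbdd lam hlam]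
      have h2 : δ ^ 2 ≤ (x - lam) ^ 2 := by
        rw [← sq_abs (x - lam)]
        gcongr
      have h3 : 2 * M ≤ (2 * M / δ ^ 2) * (x - lam) ^ 2 := by
        rw [div_mul_eq_mul_div, le_div_iff₀ (by positivity)]
        gcongr
      linarith
  have key := aux_bound φ M hφ hbdd lam hlam _ _ hE
  have hlim : Tendsto (fun n : ℕ => ε / 2 + (2 * M / δ ^ 2) * (lam ^ 2 * (1 / ((n : ℝ) + 1))))
      atTop (nhds (ε / 2)) := by
    have := ((tendsto_one_div_add_atTop_nhds_zero_nat (𝕜 := ℝ)).const_mul (lam ^ 2)).const_mul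
      (2 * M / δ ^ 2) |>.const_add (ε / 2)
    simpa using this
  filter_upwards [hlim.eventually_lt_const (show ε / 2 < ε by linarith)] with n hn
  have hk := key n
  have hcast : ((n + 3 : ℕ) : ℝ) - 1 = (n : ℝ) + 2 := by push_cast; ring
  rw [hcast, Real.dist_eq]
  exact lt_of_le_of_lt hk hn
end
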